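/- The real number e = exp 1 is not an algebraic integer; in particular, e is not a root of the characteristic polynomial of any square matrix with integer entries. -/

import Mathlib

/-!
This is Hermite's argument. A relation `c₀ + ∑ cᵢ e ^ rᵢ = 0` between integers, with `c₀ ≠ 0` and
`rᵢ ≠ 0`, is multiplied by an integer `n` prime to `p` for which every `n e ^ rᵢ` is extremely close
to a multiple `p gᵢ` of `p`. Then `n c₀ + p ∑ cᵢ gᵢ` is an integer of absolute value less than `1`,
so it vanishes and `p ∣ n c₀`, which is impossible for a prime `p > |c₀|`. Multiplying by powers of
`e` shows that the numbers `e ^ k` are linearly independent over `ℤ`, so `e` is transcendental.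
-/

open Filter Polynomial

theorem intCast_add_sum_ne_zero_of_approx {ι A : Type*} [SeminormedCommRing A] [NormOneClass A]
    [NormSMulClass ℤ A] (s : Finset ι) (x : ι → A) (c₀ : ℤ) (c g : ι → ℤ) {p n : ℤ}
    (hpn : ¬ p ∣ n * c₀) (happrox : ∑ i ∈ s, ‖c i‖ * ‖n * x i - p * g i‖ < 1) :
    (c₀ : A) + ∑ i ∈ s, c i * x i ≠ 0 := by
  intro hrel
  set M : ℤ := n * c₀ + p * ∑ i ∈ s, c i * g i with hM
  have hM_eq : (M : A) = -∑ i ∈ s, (c i : A) * (n * x i - p * g i) := by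
    have hsum : ∑ i ∈ s, (c i : A) * (n * x i - p * g i) =
        n * ∑ i ∈ s, c i * x i - p * ∑ i ∈ s, (c i : A) * g i := by
      simp only [Finset.mul_sum, ← Finset.sum_sub_distrib]
      exact Finset.sum_congr rfl fun i _ ↦ by ring
    rw [hsum, hM]
    push_cast
    linear_combination (n : A) * hrel
  have hnorm (k : ℤ) : ‖(k : A)‖ = ‖k‖ := by
    rw [norm_intCast_eq_abs_mul_norm_one, norm_one, mul_one, Int.norm_eq_abs, Int.cast_abs]
  have hM_lt : ‖M‖ < 1 := calc
    ‖M‖ = ‖∑ i ∈ s, (c i : A) * (n * x i - p * g i)‖ := by rw [← hnorm, hM_eq, norm_neg]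
    _ ≤ ∑ i ∈ s, ‖c i‖ * ‖n * x i - p * g i‖ :=
      norm_sum_le_of_le s fun i _ ↦ (norm_mul_le _ _).trans_eq (by rw [hnorm])
    _ < 1 := happrox
  have hM_zero : M = 0 := by
    rw [Int.norm_eq_abs] at hM_lt
    exact Int.abs_lt_one_iff.mp (mod_cast hM_lt)
  exact hpn ((dvd_add_left (dvd_mul_right p _)).mp (hM ▸ hM_zero ▸ dvd_zero p))

theorem tendsto_pow_div_factorial_pred_atTop (c : ℝ) :
    Tendsto (fun p : ℕ ↦ c ^ p / (p - 1).factorial) atTop (nhds 0) := by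
  rw [← tendsto_add_atTop_iff_nat 1]
  simpa [pow_succ', mul_div_assoc] using
    (FloorSemiring.tendsto_pow_div_factorial_atTop c).const_mul c

theorem eventually_exists_exp_aroots_approx (f : ℤ[X]) (hf : f.eval 0 ≠ 0) {ε : ℝ} (hε : 0 < ε) :
    ∀ᶠ p : ℕ in atTop, p.Prime → ∃ n : ℤ, ¬ (p : ℤ) ∣ n ∧ ∃ g : ℤ[X],
      ∀ z ∈ f.aroots ℂ, ‖n * Complex.exp z - p * aeval z g‖ < ε := by
  obtain ⟨c, hc⟩ := LindemannWeierstrass.exp_polynomial_approx f hf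
  filter_upwards [eventually_gt_atTop (f.eval 0).natAbs,
    (tendsto_pow_div_factorial_pred_atTop c).eventually_lt_const hε] with p hp_large hp_small hp
  obtain ⟨n, hpn, g, -, hg⟩ := hc p hp_large hp
  refine ⟨n, hpn, g, fun z hz ↦ ?_⟩
  simpa only [zsmul_eq_mul, nsmul_eq_mul] using (hg hz).trans_lt hp_small

theorem eventually_exists_exp_intCast_approx {ι : Type*} (s : Finset ι) (r : ι → ℤ)
    (hr : ∀ i ∈ s, r i ≠ 0) {ε : ℝ} (hε : 0 < ε) :
    ∀ᶠ p : ℕ in atTop, p.Prime → ∃ n : ℤ, ¬ (p : ℤ) ∣ n ∧ ∃ g : ι → ℤ,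
      ∀ i ∈ s, ‖n * Real.exp (r i) - p * g i‖ < ε := by
  set f : ℤ[X] := ∏ i ∈ s, (X - C (r i)) with hf
  have hf_eval : f.eval 0 ≠ 0 := by
    simpa [hf, eval_prod, Finset.prod_ne_zero_iff] using hr
  have hf_root : ∀ i ∈ s, (r i : ℂ) ∈ f.aroots ℂ := fun i hi ↦ by
    refine mem_aroots.mpr ⟨(monic_prod_X_sub_C r s).ne_zero, ?_⟩
    rw [hf, map_prod]
    exact Finset.prod_eq_zero hi (by simp)
  filter_upwards [eventually_exists_exp_aroots_approx f hf_eval hε] with p happrox hp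
  obtain ⟨n, hpn, g, hg⟩ := happrox hp
  refine ⟨n, hpn, fun i ↦ g.eval (r i), fun i hi ↦ ?_⟩
  have hg_eval : aeval (r i : ℂ) g = (g.eval (r i) : ℤ) := by
    simpa using aeval_algebraMap_apply_eq_algebraMap_eval (A := ℂ) (r i) g
  have happrox_i := hg (r i) (hf_root i hi)
  rw [hg_eval] at happrox_i
  rw [← Complex.norm_real]
  push_cast
  exact happrox_i

theorem intCast_add_sum_mul_exp_ne_zero {ι : Type*} (s : Finset ι) (r c : ι → ℤ)
    (hr : ∀ i ∈ s, r i ≠ 0) {c₀ : ℤ} (hc₀ : c₀ ≠ 0) :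
    (c₀ : ℝ) + ∑ i ∈ s, c i * Real.exp (r i) ≠ 0 := by
  set S : ℝ := ∑ i ∈ s, ‖c i‖
  have hS : 0 < S + 1 := by positivity
  obtain ⟨p, hp, hp_approx, hp_large⟩ :=
    ((Nat.frequently_atTop_iff_infinite.mpr Nat.infinite_setOfPred_prime).and_eventually
      ((eventually_exists_exp_intCast_approx s r hr (inv_pos.mpr hS)).and
        (eventually_gt_atTop c₀.natAbs))).exists
  obtain ⟨n, hpn, g, hg⟩ := hp_approx hp
  have hpc₀ : ¬ (p : ℤ) ∣ c₀ := fun h ↦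
    hp_large.not_ge (Nat.le_of_dvd (Int.natAbs_pos.mpr hc₀) (Int.natCast_dvd.mp h))
  refine intCast_add_sum_ne_zero_of_approx s _ c₀ c g
    ((Nat.prime_iff_prime_int.mp hp).not_dvd_mul hpn hpc₀) ?_
  calc ∑ i ∈ s, ‖c i‖ * ‖n * Real.exp (r i) - (p : ℤ) * g i‖
      ≤ ∑ i ∈ s, ‖c i‖ * (S + 1)⁻¹ := by
        gcongr with i hi
        exact_mod_cast (hg i hi).le
    _ = S / (S + 1) := by rw [← Finset.sum_mul, div_eq_mul_inv]
    _ < 1 := (div_lt_one hS).mpr (lt_add_one S)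

theorem linearIndependent_exp_intCast : LinearIndependent ℤ fun k : ℤ ↦ Real.exp k := by
  classical
  refine linearIndependent_iff'.mpr fun s c hrel k hk ↦ by_contra fun hck ↦ ?_
  have hshift : ∀ i ∈ s.erase k, i - k ≠ 0 := fun i hi ↦
    sub_ne_zero.mpr (Finset.ne_of_mem_erase hi)
  refine intCast_add_sum_mul_exp_ne_zero (s.erase k) (· - k) c hshift hck ?_
  calc (c k : ℝ) + ∑ i ∈ s.erase k, c i * Real.exp ((i - k : ℤ) : ℝ)
      = ∑ i ∈ s, c i * Real.exp ((i - k : ℤ) : ℝ) := by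
        simp [← Finset.add_sum_erase s _ hk]
    _ = (∑ i ∈ s, c i • Real.exp i) * Real.exp (-k) := by
        rw [Finset.sum_mul]
        refine Finset.sum_congr rfl fun i _ ↦ ?_
        rw [Int.cast_sub, sub_eq_add_neg, Real.exp_add, zsmul_eq_mul, mul_assoc]
    _ = 0 := by rw [hrel, zero_mul]

theorem transcendental_iff_linearIndependent_pow {R A : Type*} [CommRing R] [Ring A] [Algebra R A]
    {x : A} : Transcendental R x ↔ LinearIndependent R fun n : ℕ ↦ x ^ n := by
  have h := linearIndependent_powers_iff_aeval (Algebra.lmul R A x) 1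
  simp only [← map_pow, aeval_algHom_apply] at h
  simpa [transcendental_iff] using h.symm

theorem exp_one_not_algebraic_integer_general : Transcendental ℤ (Real.exp 1) := by
  refine transcendental_iff_linearIndependent_pow.mpr ?_
  simpa [Function.comp_def] using
    linearIndependent_exp_intCast.comp _ Nat.cast_injective

/-- The real number `e = exp 1` is not an algebraic integer; in particular, `e` is not
a root of the characteristic polynomial of any square matrix with integer entries. -/
theorem exp_one_not_algebraic_integer :
    ¬ IsIntegral ℤ (Real.exp 1) ∧
      ∀ (n : ℕ) (A : Matrix (Fin n) (Fin n) ℤ),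
        Polynomial.aeval (Real.exp 1) A.charpoly ≠ 0 :=
  ⟨fun h ↦ exp_one_not_algebraic_integer_general h.isAlgebraic, fun _ A h ↦
    exp_one_not_algebraic_integer_general ⟨A.charpoly, A.charpoly_monic.ne_zero, h⟩⟩
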